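/- Bound states of the Schrödinger operator with Morse potential: let n ∈ ℕ₀, let k ∈ ℂ with Re(k) > 0, let β ∈ ℂ, and set m := β/(2k) − n − 1/2; assume Re(m) > 0. Then the function u(x) := I_{β/(2k), m}(2k·e^x) on ℝ satisfies: (i) −u''(x) + k²e^{2x}·u(x) − β·e^x·u(x) = −m²·u(x) for all x ∈ ℝ; (ii) ∫_ℝ |u(x)|² dx < ∞. Hence −m² belongs to the point spectrum of the operator M_{β,k} = −∂_x² + k²e^{2x} − βe^x. -/

import Mathlib

open Complex MeasureTheory

/-- Olver-normalized confluent hypergeometric function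
`₁𝐅₁(a; c; w) = ∑ (a)ₙ wⁿ/(n! Γ(c+n))`. -/
noncomputable def oneF1reg (a c w : ℂ) : ℂ :=
  ∑' n : ℕ, (ascPochhammer ℂ n).eval a * w ^ n / ((n.factorial : ℂ) * Complex.Gamma (c + n))

/-- 1d Whittaker function `𝓘_{β,m}(z) = z^{1/2+m} e^{-z/2} ₁𝐅₁(1/2+m-β; 1+2m; z)`
(principal branch powers). -/
noncomputable def whittI (β m z : ℂ) : ℂ :=
  z ^ ((1 : ℂ) / 2 + m) * Complex.exp (-z / 2) * oneF1reg (1 / 2 + m - β) (1 + 2 * m) z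

/-- 2d Whittaker function `I_{β,m}(z) = √(2/(πz)) 𝓘_{β,m}(z)` (principal branch). -/
noncomputable def whittI2d (β m z : ℂ) : ℂ :=
  (2 / ((Real.pi : ℂ) * z)) ^ ((1 : ℂ) / 2) * whittI β m z

noncomputable def kumCoeff (n : ℕ) (m : ℂ) (j : ℕ) : ℂ :=
  (ascPochhammer ℂ j).eval (-(n : ℂ)) / ((j.factorial : ℂ) * Complex.Gamma (1 + 2 * m + j))

noncomputable def kumPoly (n : ℕ) (m : ℂ) : Polynomial ℂ :=
  ∑ j ∈ Finset.range (n + 1), Polynomial.monomial j (kumCoeff n m j)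

lemma kumCoeff_zero (n : ℕ) (m : ℂ) (j : ℕ) (h : n < j) : kumCoeff n m j = 0 := by
  unfold kumCoeff
  rw [ascPochhammer_eval_neg_coe_nat_of_lt h, zero_div]

lemma kumPoly_coeff (n : ℕ) (m : ℂ) (j : ℕ) : (kumPoly n m).coeff j = kumCoeff n m j := by
  unfold kumPoly
  simp only [Polynomial.finsetSum_coeff, Polynomial.coeff_monomial]
  rw [Finset.sum_ite_eq']
  split_ifs with h
  · rfl
  · rw [kumCoeff_zero]
    simpa using h

lemma oneF1reg_eq (n : ℕ) (m w : ℂ) :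
    oneF1reg (-(n : ℂ)) (1 + 2 * m) w = (kumPoly n m).eval w := by
  unfold oneF1reg kumPoly
  rw [tsum_eq_sum (s := Finset.range (n + 1)), Polynomial.eval_finsetSum]
  · refine Finset.sum_congr rfl fun j _ => ?_
    rw [Polynomial.eval_monomial, kumCoeff]
    ring
  · intro j hj
    rw [ascPochhammer_eval_neg_coe_nat_of_lt (by simpa using hj)]
    simp

lemma kumCoeff_rec (n : ℕ) (m : ℂ) (hm : 0 < m.re) (j : ℕ) :
    kumCoeff n m (j + 1) * ((j + 1 : ℂ) * (1 + 2 * m + j)) = kumCoeff n m j * (-(n : ℂ) + j) := by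
  have hre : 0 < (1 + 2 * m + j : ℂ).re := by
    simp
    positivity
  have h0 : (1 + 2 * m + j : ℂ) ≠ 0 := by
    intro h
    rw [h] at hre
    simp at hre
  have hG : Complex.Gamma (1 + 2 * m + j) ≠ 0 := Complex.Gamma_ne_zero_of_re_pos hre
  have hf : (j.factorial : ℂ) ≠ 0 := by exact_mod_cast j.factorial_ne_zero
  have hj : (j + 1 : ℂ) ≠ 0 := by exact_mod_cast j.succ_ne_zero
  have e : (1 + 2 * m + ((j + 1 : ℕ) : ℂ)) = (1 + 2 * m + j) + 1 := by push_cast; ring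
  unfold kumCoeff
  rw [e, Complex.Gamma_add_one _ h0, ascPochhammer_succ_eval, Nat.factorial_succ]
  push_cast
  field_simp

lemma kummer (n : ℕ) (m : ℂ) (hm : 0 < m.re) :
    Polynomial.X * (kumPoly n m).derivative.derivative
      + (Polynomial.C (1 + 2 * m) - Polynomial.X) * (kumPoly n m).derivative
      + Polynomial.C (n : ℂ) * kumPoly n m = 0 := by
  ext j
  have := kumCoeff_rec n m hm j
  cases j with
  | zero =>
    simp [-map_add, sub_mul, Polynomial.coeff_derivative, kumPoly_coeff] at this ⊢
    linear_combination this
  | succ j =>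
    simp [-map_add, sub_mul, Polynomial.coeff_derivative, kumPoly_coeff] at this ⊢
    linear_combination this

lemma int_exp (s r : ℝ) (hs : 0 < s) (hr : 0 < r) :
    Integrable (fun x : ℝ => Real.exp (s * x - r * Real.exp x)) := by
  have h := integrableOn_rpow_mul_exp_neg_mul_rpow (p := 1) (s := s - 1) (b := r)
    (by linarith) one_pos hr
  have e : Set.Ioi (0 : ℝ) = Real.exp '' Set.univ := by
    rw [Set.image_univ, Real.range_exp]
  rw [e, integrableOn_image_iff_integrableOn_abs_deriv_smul MeasurableSet.univ
    (fun x _ => (Real.hasDerivAt_exp x).hasDerivWithinAt) Real.exp_injective.injOn,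
    integrableOn_univ] at h
  refine h.congr (Filter.Eventually.of_forall fun x => ?_)
  simp only [smul_eq_mul, Real.rpow_one]
  rw [abs_of_pos (Real.exp_pos x), ← Real.exp_mul, ← Real.exp_add, ← Real.exp_add]
  congr 1
  ring

lemma u_form (n : ℕ) (k : ℂ) (hk : 0 < k.re) (m b : ℂ) (hb : 1 / 2 + m - b = -(n : ℂ)) :
    ∃ A : ℂ, ∀ x : ℝ, whittI2d b m (2 * k * Real.exp x) =
      A * (Complex.exp (m * x - k * Complex.exp x) *
        (kumPoly n m).eval (2 * k * Complex.exp x)) := by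
  have hk0 : k ≠ 0 := by
    rintro rfl
    simp at hk
  have hpi : (Real.pi : ℂ) ≠ 0 := by exact_mod_cast Real.pi_ne_zero
  refine ⟨Complex.exp (Complex.log (1 / (Real.pi * k)) * (1 / 2) +
    Complex.log (2 * k) * (1 / 2 + m)), fun x => ?_⟩
  have hE : (Real.exp x : ℂ) ≠ 0 := by exact_mod_cast (Real.exp_pos x).ne'
  have h1 : (2 / ((Real.pi : ℂ) * (2 * k * Real.exp x))) =
      (Real.exp (-x) : ℝ) * (1 / (Real.pi * k)) := by
    rw [Real.exp_neg]
    push_cast at hE ⊢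
    field_simp
  have h2 : 2 * k * (Real.exp x : ℂ) = (Real.exp x : ℝ) * (2 * k) := by ring
  have h3 : (1 / (Real.pi * k) : ℂ) ≠ 0 := by simp [hk0, hpi]
  have h4 : (2 * k : ℂ) ≠ 0 := by simp [hk0]
  unfold whittI2d whittI
  rw [hb, oneF1reg_eq, h1, Complex.cpow_def_of_ne_zero
    (mul_ne_zero (by exact_mod_cast (Real.exp_pos _).ne') h3),
    Complex.log_ofReal_mul (Real.exp_pos _) h3, h2,
    Complex.cpow_def_of_ne_zero (mul_ne_zero hE h4),
    Complex.log_ofReal_mul (Real.exp_pos _) h4, Real.log_exp, Real.log_exp, ← h2,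
    Complex.ofReal_exp]
  rw [← mul_assoc, ← mul_assoc, ← mul_assoc, ← Complex.exp_add, ← Complex.exp_add,
    ← Complex.exp_add]
  congr 2
  push_cast
  ring

lemma hasDeriv_aux (P : Polynomial ℂ) (m k : ℂ) (x : ℝ) :
    HasDerivAt (fun x : ℝ => Complex.exp (m * x - k * Complex.exp x) *
      P.eval (2 * k * Complex.exp x))
      (Complex.exp (m * x - k * Complex.exp x) *
        ((Polynomial.C m - Polynomial.C (1 / 2) * Polynomial.X) * P
          + Polynomial.X * P.derivative).eval (2 * k * Complex.exp x)) x := by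
  have hE : HasDerivAt (fun x : ℝ => Complex.exp x) (Complex.exp x) x :=
    (Complex.hasDerivAt_exp (x : ℂ)).comp_ofReal
  have hid : HasDerivAt (fun x : ℝ => (x : ℂ)) 1 x := (hasDerivAt_id (x : ℂ)).comp_ofReal
  have h1 := ((hid.const_mul m).sub (hE.const_mul k)).cexp
  have h2 : HasDerivAt (fun x : ℝ => P.eval (2 * k * Complex.exp x))
      (P.derivative.eval (2 * k * Complex.exp x) * (2 * k * Complex.exp x)) x :=
    (HasDerivAt.comp (h₂ := fun w => P.eval w) (x : ℂ) (P.hasDerivAt (2 * k * Complex.exp x))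
      ((Complex.hasDerivAt_exp (x : ℂ)).const_mul (2 * k))).comp_ofReal
  refine (h1.mul h2).congr_deriv ?_
  simp
  ring

/-- bound states of the Schrödinger operator with Morse potential: for
`n ∈ ℕ₀`, `Re k > 0`, `β ∈ ℂ`, `m = β/(2k) - n - 1/2` with `Re m > 0`, the function
`u(x) = I_{β/(2k), m}(2k e^x)` solves `-u'' + k²e^{2x}u - βe^x u = -m²u` on `ℝ` and is
square integrable; hence `-m²` is in the point spectrum of `M_{β,k}`. -/
theorem morse_bound_state (n : ℕ) (k : ℂ) (hk : 0 < k.re) (β : ℂ) (m : ℂ)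
    (hm : m = β / (2 * k) - (n : ℂ) - 1 / 2) (hmre : 0 < m.re)
    (u : ℝ → ℂ) (hu : ∀ x : ℝ, u x = whittI2d (β / (2 * k)) m (2 * k * Real.exp x)) :
    (∀ x : ℝ,
      -deriv (deriv u) x + k ^ 2 * (Real.exp (2 * x) : ℂ) * u x -
          β * (Real.exp x : ℂ) * u x = -m ^ 2 * u x) ∧
    Integrable (fun x : ℝ => ‖u x‖ ^ 2) := by
  have hk0 : k ≠ 0 := by
    rintro rfl
    simp at hk
  obtain ⟨A, hA⟩ := u_form n k hk m (β / (2 * k)) (by rw [hm]; ring)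
  have hβ : β = 2 * k * (m + n + 1 / 2) := by
    rw [hm]
    field_simp
    ring
  have hu' : u = fun x : ℝ => A * (Complex.exp (m * x - k * Complex.exp x) *
        (kumPoly n m).eval (2 * k * Complex.exp x)) := by
    funext x
    rw [hu, hA]
  constructor
  · intro x
    have hd1 : deriv u = fun x : ℝ => A * (Complex.exp (m * x - k * Complex.exp x) *
        ((Polynomial.C m - Polynomial.C (1 / 2) * Polynomial.X) * kumPoly n m
          + Polynomial.X * (kumPoly n m).derivative).eval (2 * k * Complex.exp x)) := by
      rw [hu']
      funext y
      exact ((hasDeriv_aux (kumPoly n m) m k y).const_mul A).deriv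
    have hd2 := ((hasDeriv_aux
      ((Polynomial.C m - Polynomial.C (1 / 2) * Polynomial.X) * kumPoly n m
          + Polynomial.X * (kumPoly n m).derivative) m k x).const_mul A).deriv
    rw [hd1, hd2, hu']
    have hK := congrArg (Polynomial.eval (2 * k * Complex.exp x)) (kummer n m hmre)
    have e2 : ((Real.exp (2 * x) : ℝ) : ℂ) = Complex.exp x ^ 2 := by
      rw [two_mul, Real.exp_add]
      push_cast
      ring
    rw [e2, Complex.ofReal_exp, hβ]
    simp at hK ⊢
    linear_combination (-A * Complex.exp (m * x - k * Complex.exp x) *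
      (2 * k * Complex.exp x)) * hK
  · have hcont : Continuous u := by
      rw [hu']
      fun_prop
    rw [← memLp_two_iff_integrable_sq_norm hcont.aestronglyMeasurable]
    have hs : u = fun x : ℝ => ∑ j ∈ Finset.range (n + 1),
        (A * kumCoeff n m j * (2 * k) ^ j) *
          Complex.exp ((m + j) * x - k * Complex.exp x) := by
      rw [hu']
      funext x
      rw [kumPoly, Polynomial.eval_finsetSum, Finset.mul_sum, Finset.mul_sum]
      refine Finset.sum_congr rfl fun j _ => ?_
      rw [Polynomial.eval_monomial, mul_pow, ← Complex.exp_nat_mul,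
        show (m + j) * x - k * Complex.exp x = (m * x - k * Complex.exp x) + j * x by ring,
        Complex.exp_add]
      ring
    rw [hs]
    refine memLp_finsetSum _ fun j _ => MemLp.const_mul ?_ _
    rw [memLp_two_iff_integrable_sq_norm (Continuous.aestronglyMeasurable (by fun_prop))]
    refine (int_exp (2 * (m.re + j)) (2 * k.re) (by positivity) (by positivity)).congr
      (Filter.Eventually.of_forall fun x => ?_)
    simp only [Complex.norm_exp]
    rw [← Real.exp_nat_mul]
    congr 1
    have e : (k * Complex.exp x).re = k.re * Real.exp x := by
      rw [← Complex.ofReal_exp, Complex.re_mul_ofReal]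
    rw [Complex.sub_re, e, Complex.re_mul_ofReal]
    simp
    ring
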